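/- For any integer k ≥ 1 and any integer c, the number φ_2(3^k, c) of pairs of exceptional units of ℤ_{3^k} summing to c modulo 3^k equals 3^{k-1} if c ≡ 1 (mod 3), and equals 0 otherwise. -/

import Mathlib

/-- `phi k n c` is the number of `k`-tuples of exceptional units of `ℤ/nℤ`
(i.e. elements `u` with both `u` and `1 - u` units) summing to `c` modulo `n`. -/
noncomputable def phi (k n : ℕ) (c : ℤ) : ℕ :=
  Nat.card {x : Fin k → ZMod n //
    (∀ i, IsUnit (x i) ∧ IsUnit (1 - x i)) ∧ ∑ i, x i = (c : ZMod n)}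

/-!
Reduction `ℤ/nℤ → ℤ/mℤ` is a local homomorphism when `m` and `n` have the same prime factors, so
exceptional units are detected modulo `m`. A tuple with sum `c` is determined by all but one of its
entries, and these form a full preimage under a surjective homomorphism; hence passing from `m` to
`n` multiplies the number of `(s + 1)`-tuples by `(n / m) ^ s`. Modulo `3` the only exceptional unit
is `-1`.
-/

/-- Exceptional units of a ring: units `u` such that `1 - u` is also a unit. -/
def IsExceptionalUnit {R : Type*} [Ring R] (u : R) : Prop :=
  IsUnit u ∧ IsUnit (1 - u)

lemma isExceptionalUnit_map_iff {R S : Type*} [Ring R] [Ring S] (f : R →+* S) [IsLocalHom f]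
    {u : R} : IsExceptionalUnit (f u) ↔ IsExceptionalUnit u := by
  rw [IsExceptionalUnit, IsExceptionalUnit, ← map_one f, ← map_sub, isUnit_map_iff, isUnit_map_iff]

lemma isExceptionalUnit_zmod_three_iff {u : ZMod 3} : IsExceptionalUnit u ↔ u = -1 := by
  rw [IsExceptionalUnit, isUnit_iff_ne_zero, isUnit_iff_ne_zero]
  decide +revert

lemma isLocalHom_castHom_of_dvd_pow {m n k : ℕ} (hmn : m ∣ n) (hnm : n ∣ m ^ k) :
    IsLocalHom (ZMod.castHom hmn (ZMod m)) where
  map_nonunit a ha := by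
    obtain ⟨a, rfl⟩ := ZMod.intCast_surjective a
    rw [map_intCast, ZMod.coe_int_isUnit_iff_isCoprime] at ha
    rw [ZMod.coe_int_isUnit_iff_isCoprime]
    exact (ha.pow_left (m := k)).of_isCoprime_of_dvd_left (mod_cast hnm)

lemma card_subtype_comp_of_surjective {A B : Type*} [AddGroup A] [AddGroup B] [Finite A]
    {f : A →+ B} (hf : Function.Surjective f) (P : B → Prop) :
    Nat.card {a // P (f a)} = Nat.card A / Nat.card B * Nat.card {b // P b} := by
  have card_ker : Nat.card f.ker = Nat.card A / Nat.card B := by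
    have : Finite B := .of_surjective f hf
    rw [← f.ker.card_mul_index, AddSubgroup.index_ker,
      AddMonoidHom.range_eq_top.mpr hf, AddSubgroup.card_top, Nat.mul_div_cancel _ Nat.card_pos]
  have fibration : {a // P (f a)} ≃ {b // P b} × f.ker :=
    calc {a // P (f a)}
      _ ≃ Σ b : {b // P b}, {a // f a = b} :=
        (Equiv.sigmaSubtypeFiberEquivSubtype f fun _ ↦ Iff.rfl).symm
      _ ≃ Σ _ : {b // P b}, f.ker :=
        Equiv.sigmaCongrRight fun b ↦ AddMonoidHom.fiberEquivKerOfSurjective hf b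
      _ ≃ {b // P b} × f.ker := Equiv.sigmaEquivProd _ _
  rw [Nat.card_congr fibration, Nat.card_prod, card_ker, mul_comm]

/-- A tuple with prescribed sum corresponds to the tuple of its entries other than the first. -/
def sumEqEquivTail {A : Type*} [AddCommGroup A] (P : A → Prop) (s : ℕ) (c : A) :
    {x : Fin (s + 1) → A // (∀ i, P (x i)) ∧ ∑ i, x i = c} ≃
      {y : Fin s → A // P (c - ∑ i, y i) ∧ ∀ i, P (y i)} where
  toFun x := ⟨Fin.tail x.1, by
    obtain ⟨x, hP, rfl⟩ := x
    simp [Fin.sum_univ_succ, Fin.tail, hP]⟩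
  invFun y := ⟨Fin.cons (c - ∑ i, y.1 i) y.1, by
    simpa [Fin.forall_fin_succ, Fin.sum_univ_succ] using y.2⟩
  left_inv := by
    rintro ⟨x, hP, rfl⟩
    ext i
    cases i using Fin.cases <;> simp [Fin.sum_univ_succ, Fin.tail]
  right_inv y := by simp

lemma phi_succ (s n : ℕ) (c : ℤ) :
    phi (s + 1) n c = Nat.card {y : Fin s → ZMod n //
      IsExceptionalUnit (c - ∑ i, y i) ∧ ∀ i, IsExceptionalUnit (y i)} :=
  Nat.card_congr (sumEqEquivTail IsExceptionalUnit s (c : ZMod n))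

lemma phi_succ_eq_pow_mul_phi {m n k : ℕ} [NeZero n] (hmn : m ∣ n) (hnm : n ∣ m ^ k) (s : ℕ)
    (c : ℤ) : phi (s + 1) n c = (n / m) ^ s * phi (s + 1) m c := by
  let f := ZMod.castHom hmn (ZMod m)
  have : IsLocalHom f := isLocalHom_castHom_of_dvd_pow hmn hnm
  have hf : Function.Surjective (f.toAddMonoidHom.compLeft (Fin s)) :=
    (ZMod.castHom_surjective hmn).comp_left
  have reduce (y : Fin s → ZMod n) :
      (IsExceptionalUnit (c - ∑ i, y i) ∧ ∀ i, IsExceptionalUnit (y i)) ↔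
        IsExceptionalUnit (c - ∑ i, f (y i)) ∧ ∀ i, IsExceptionalUnit (f (y i)) := by
    rw [← map_intCast f, ← map_sum, ← map_sub]
    simp only [isExceptionalUnit_map_iff]
  calc phi (s + 1) n c
    _ = Nat.card {y : Fin s → ZMod n //
          IsExceptionalUnit (c - ∑ i, f (y i)) ∧ ∀ i, IsExceptionalUnit (f (y i))} := by
      simp only [phi_succ, reduce]
    _ = n ^ s / m ^ s * phi (s + 1) m c := by
      simpa [phi_succ, Nat.card_fun] using card_subtype_comp_of_surjective hf fun y ↦
        IsExceptionalUnit (c - ∑ i, y i) ∧ ∀ i, IsExceptionalUnit (y i)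
    _ = (n / m) ^ s * phi (s + 1) m c := by rw [Nat.div_pow hmn]

lemma phi_three (s : ℕ) (c : ℤ) : phi s 3 c = if c ≡ -s [ZMOD 3] then 1 else 0 := by
  have sum_iff : ∑ _i : Fin s, (-1 : ZMod 3) = c ↔ c ≡ -s [ZMOD 3] := by
    simpa [eq_comm] using ZMod.intCast_eq_intCast_iff (-s) c 3 |>.trans Int.modEq_comm
  have tuple_iff (x : Fin s → ZMod 3) :
      ((∀ i, IsExceptionalUnit (x i)) ∧ ∑ i, x i = c) ↔ x = (fun _ ↦ -1) ∧ c ≡ -s [ZMOD 3] := by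
    rw [← sum_iff, funext_iff]
    simp only [isExceptionalUnit_zmod_three_iff]
    exact and_congr_right fun hx ↦ by simp only [hx]
  change Nat.card {x : Fin s → ZMod 3 // (∀ i, IsExceptionalUnit (x i)) ∧ ∑ i, x i = c} = _
  simp only [tuple_iff]
  split_ifs with hc <;> simp [hc]

theorem phi_two_three_pow_general (s k : ℕ) (hk : 1 ≤ k) (c : ℤ) :
    phi (s + 1) (3 ^ k) c = if c ≡ -(s + 1) [ZMOD 3] then 3 ^ ((k - 1) * s) else 0 := by
  have quotient : 3 ^ k / 3 = 3 ^ (k - 1) := by simpa using Nat.pow_div hk three_pos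
  rw [phi_succ_eq_pow_mul_phi (dvd_pow_self 3 (by lia)) dvd_rfl, phi_three, quotient, ← pow_mul]
  simp

theorem phi_two_three_pow (k : ℕ) (hk : 1 ≤ k) (c : ℤ) :
    phi 2 (3 ^ k) c = if c % 3 = 1 then 3 ^ (k - 1) else 0 := by
  simpa [Int.ModEq] using phi_two_three_pow_general 1 k hk c
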